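/- arXiv:2203.03476 — 5 statements merged into one kernel-verified Lean document; each statement's English description precedes it below -/
import Mathlib

section
/- Let P be a finite ranked squared poset with rank function ℓ, let ε be a sign assignment on P, let R be a commutative ring, and let F be a covariant functor from the category associated to P to the category of R-modules. Define C^n := ⊕_{x ∈ P, ℓ(x) = n} F(x) and d^n : C^n → C^{n+1} as the sum, over all x with ℓ(x) = n and all x' with x ⋖ x', of (−1)^{ε(x,x')} F(x ≤ x'). Then d^{n+1} ∘ d^n = 0 for every n; in particular (C^*, d^*) is a cochain complex. -/
/-!
The component of `d (d c)` at `z` is a double sum over chains `x ⋖ y ⋖ z`. By functoriality the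
summand of such a chain is `(-1)^(ε y z + ε x y) • F (x ≤ z) (c x)`, which depends on `y` only through
its sign. For fixed `x` and `z`, squaredness says that there are either no intermediate `y` or
exactly two, and in the latter case the sign condition makes the two summands cancel
(`neg_one_pow_square_cancel`).
-/

/-!
STATEMENT 0: For a finite ranked squared poset `P` with rank function `ℓ`, a sign
assignment `ε`, a commutative ring `R` and a functor `F` from (the category associated
to) `P` to `R`-modules, the groups `C^n = ⊕_{ℓ x = n} F x` together with the maps
`d^n = Σ_{x ⋖ x'} (-1)^{ε x x'} F(x ≤ x')` satisfy `d^{n+1} ∘ d^n = 0`.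
-/

open CategoryTheory

open scoped Classical

/-- The `n`-th cochain group: the (finite) product of the modules `F.obj x` over the
elements `x` of rank `n` (for a finite poset this agrees with the direct sum). -/
abbrev posetCochain {P : Type*} [PartialOrder P] [Fintype P] {R : Type*} [CommRing R]
    (F : P ⥤ ModuleCat R) (ℓ : P → ℕ) (n : ℕ) : Type _ :=
  Π x : {x : P // ℓ x = n}, F.obj x.val

/-- The differential `d^n : C^n → C^{n+1}`, the sum over all covering pairs `x ⋖ x'`
with `ℓ x = n` of `(-1)^{ε x x'} F(x ≤ x')`. -/
noncomputable def posetDiff {P : Type*} [PartialOrder P] [Fintype P] {R : Type*}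
    [CommRing R] (F : P ⥤ ModuleCat R) (ℓ : P → ℕ) (ε : P → P → ZMod 2) (n : ℕ)
    (c : posetCochain F ℓ n) : posetCochain F ℓ (n + 1) :=
  fun y => ∑ x : {x : P // ℓ x = n},
    if h : x.val ⋖ y.val then
      ((-1 : ℤ) ^ (ε x.val y.val).val) • (F.map (homOfLE h.le)) (c x)
    else 0

/-- The two paths of a square, with signs `a, b` and `a', b'` on their edges, contribute opposite
signs to `d ∘ d`, since their total exponents have different parity. -/
lemma neg_one_pow_square_cancel {a b a' b' : ZMod 2} (h : a + b = a' + b' + 1) :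
    (-1 : ℤ) ^ b.val * (-1) ^ a.val + (-1) ^ b'.val * (-1) ^ a'.val = 0 := by
  revert a b a' b'
  decide

/-- If `P` is a finite poset, `ℓ` a rank function (covering relations raise `ℓ` by one),
`P` is squared (each length-two chain `z ⋖ y ⋖ x` completes to a unique square), and
`ε` is a sign assignment (its restriction to covering pairs satisfies the sign condition
on every square), then for every functor `F : P ⥤ ModuleCat R` the composite
`d^{n+1} ∘ d^n` vanishes, i.e. `(C^*, d^*)` is a cochain complex. -/
theorem posetDiff_comp_posetDiff_eq_zero {P : Type*} [PartialOrder P] [Fintype P]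
    {R : Type*} [CommRing R] (F : P ⥤ ModuleCat R) (ℓ : P → ℕ)
    (hrank : ∀ x y : P, x ⋖ y → ℓ y = ℓ x + 1)
    (hsquared : ∀ x y z : P, z ⋖ y → y ⋖ x → ∃! y' : P, y' ≠ y ∧ z ⋖ y' ∧ y' ⋖ x)
    (ε : P → P → ZMod 2)
    (hsign : ∀ x y y' z : P, x ⋖ y → y ⋖ z → x ⋖ y' → y' ⋖ z → y ≠ y' →
      ε x y + ε y z = ε x y' + ε y' z + 1)
    (n : ℕ) (c : posetCochain F ℓ n) :
    posetDiff F ℓ ε (n + 1) (posetDiff F ℓ ε n c) = 0 := by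
  funext z
  have hcomp : ∀ (y : {y : P // ℓ y = n + 1}) (x : {x : P // ℓ x = n}) (hxy : x.val ⋖ y.val)
      (hyz : y.val ⋖ z.val), (F.map (homOfLE hyz.le)) ((F.map (homOfLE hxy.le)) (c x)) =
        (F.map (homOfLE (hxy.le.trans hyz.le))) (c x) := by
    intro y x hxy hyz
    rw [← ModuleCat.comp_apply, ← F.map_comp]
    rfl
  have hexpand : posetDiff F ℓ ε (n + 1) (posetDiff F ℓ ε n c) z =
      ∑ y : {y : P // ℓ y = n + 1}, ∑ x : {x : P // ℓ x = n},
        if h : x.val ⋖ y.val ∧ y.val ⋖ z.val then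
          ((-1 : ℤ) ^ (ε y.val z.val).val * (-1) ^ (ε x.val y.val).val) •
            (F.map (homOfLE (h.1.le.trans h.2.le))) (c x)
        else 0 := by
    unfold posetDiff
    refine Finset.sum_congr rfl fun y _ => ?_
    by_cases hyz : y.val ⋖ z.val
    · rw [dif_pos hyz, map_sum, Finset.smul_sum]
      refine Finset.sum_congr rfl fun x _ => ?_
      by_cases hxy : x.val ⋖ y.val
      · rw [dif_pos hxy, dif_pos ⟨hxy, hyz⟩, map_zsmul, smul_smul, hcomp y x hxy hyz]
      · rw [dif_neg hxy, dif_neg (fun h => hxy h.1), map_zero, smul_zero]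
    · rw [dif_neg hyz]
      exact (Finset.sum_eq_zero fun x _ => dif_neg fun h => hyz h.2).symm
  rw [hexpand, Finset.sum_comm]
  refine Finset.sum_eq_zero fun x _ => ?_
  by_cases hex : ∃ y : P, x.val ⋖ y ∧ y ⋖ z.val
  · obtain ⟨y, hxy, hyz⟩ := hex
    obtain ⟨y', ⟨hne, hxy', hyz'⟩, huniq⟩ := hsquared z.val y x.val hxy hyz
    -- Both middle elements have rank `n + 1`, so they index summands.
    have hy : ℓ y = n + 1 := by rw [hrank _ _ hxy, x.2]
    have hy' : ℓ y' = n + 1 := by rw [hrank _ _ hxy', x.2]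
    rw [Fintype.sum_eq_add ⟨y, hy⟩ ⟨y', hy'⟩ (fun h => hne (congrArg Subtype.val h).symm),
      dif_pos ⟨hxy, hyz⟩, dif_pos ⟨hxy', hyz'⟩, ← add_smul,
      neg_one_pow_square_cancel (hsign _ _ _ _ hxy hyz hxy' hyz' hne.symm), zero_smul]
    rintro w ⟨hw, hw'⟩
    refine dif_neg fun h => hw' (Subtype.ext (huniq w.val ⟨fun e => hw (Subtype.ext e), h⟩))
  · exact Finset.sum_eq_zero fun y _ => dif_neg fun h => hex ⟨y.val, h⟩
end

section
/- Let G be a finite simple graph and 𝔬 an orientation of G. The poset of matchings of G ordered by inclusion is order-isomorphic to the path poset P(G_𝔬) of multipaths of G_𝔬 ordered by inclusion if and only if 𝔬 is alternating. -/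
/-!
Sending a matching `m` to the set of directed edges lying over it (`orientedLift`) is an
order embedding of the matching poset into the path poset: disjoint edges can neither share
a source, share a target, nor be consecutive (`orientedLift_isMultipath`).

If the orientation is alternating, no vertex is both a source and a target, so two distinct
edges of a multipath are disjoint; hence every multipath lies over a matching and the
embedding is an isomorphism (`image_isGraphMatching`).

Conversely, if the two posets are isomorphic, they are finite of equal cardinality, so the
embedding is surjective. Were the orientation not alternating, some vertex `v` would carry
edges `(u, v)` and `(v, w)`; these form a multipath (`pair_isMultipath`) that does not lie over
a matching, a contradiction.
-/

/-- The indegree of `v` in a set `S` of directed edges. -/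
def indegIn {V : Type*} [DecidableEq V] (S : Finset (V × V)) (v : V) : ℕ :=
  (S.filter fun e => e.2 = v).card

/-- The outdegree of `v` in a set `S` of directed edges. -/
def outdegIn {V : Type*} [DecidableEq V] (S : Finset (V × V)) (v : V) : ℕ :=
  (S.filter fun e => e.1 = v).card

/-- `D` is an orientation of the simple graph `G`: it consists of directed versions of
edges of `G`, and each edge `{v,w}` of `G` receives exactly one of the two directions. -/
def IsOrientation {V : Type*} (G : SimpleGraph V) (D : Finset (V × V)) : Prop :=
  (∀ p ∈ D, G.Adj p.1 p.2) ∧ ∀ v w : V, G.Adj v w → ((v, w) ∈ D ↔ (w, v) ∉ D)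

/-- An orientation (given as a set `D` of directed edges) is alternating if the vertex
set splits into a part where every vertex has indegree 0 and a part where every vertex
has outdegree 0. -/
def IsAlternating {V : Type*} [DecidableEq V] (D : Finset (V × V)) : Prop :=
  ∃ A : Set V, (∀ v ∈ A, indegIn D v = 0) ∧ ∀ v ∉ A, outdegIn D v = 0

/-- `S` contains a coherently oriented cycle: a nonempty cyclic sequence of pairwise
distinct edges of `S` in which the target of each edge is the source of the next. -/
def HasCohCycle {V : Type*} (S : Finset (V × V)) : Prop :=
  ∃ (n : ℕ) (f : ZMod (n + 1) → V × V), Function.Injective f ∧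
    (∀ i, f i ∈ S) ∧ ∀ i, (f i).2 = (f (i + 1)).1

/-- `S` is a multipath of the oriented graph with edge set `D`: a subset of `D` in which
every vertex has indegree and outdegree at most 1 and which contains no coherently
oriented cycle. -/
def IsMultipathIn {V : Type*} [DecidableEq V] (D S : Finset (V × V)) : Prop :=
  S ⊆ D ∧ (∀ v : V, indegIn S v ≤ 1) ∧ (∀ v : V, outdegIn S v ≤ 1) ∧ ¬ HasCohCycle S

/-- A matching on a simple graph `G`: a set of edges of `G` that are pairwise disjoint. -/
def IsGraphMatching {V : Type*} (G : SimpleGraph V) (m : Finset (Sym2 V)) : Prop :=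
  (∀ e ∈ m, e ∈ G.edgeSet) ∧
    ∀ e ∈ m, ∀ e' ∈ m, e ≠ e' → ∀ v : V, v ∈ e → v ∉ e'

/-- The directed edges of `D` whose underlying undirected edge belongs to `m`. -/
def orientedLift {V : Type*} [DecidableEq V] (D : Finset (V × V)) (m : Finset (Sym2 V)) :
    Finset (V × V) :=
  D.filter fun e => s(e.1, e.2) ∈ m

section

variable {V : Type*} [DecidableEq V] {G : SimpleGraph V} {D : Finset (V × V)}

theorem mem_orientedLift {m : Finset (Sym2 V)} {e : V × V} :
    e ∈ orientedLift D m ↔ e ∈ D ∧ s(e.1, e.2) ∈ m := by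
  simp [orientedLift]

theorem IsOrientation.not_swap_mem (hD : IsOrientation G D) {v w : V} (h : (v, w) ∈ D) :
    (w, v) ∉ D :=
  (hD.2 v w (hD.1 _ h)).1 h

theorem IsOrientation.ne (hD : IsOrientation G D) {e : V × V} (h : e ∈ D) : e.1 ≠ e.2 :=
  (hD.1 _ h).ne

theorem IsOrientation.eq_of_sym2_eq (hD : IsOrientation G D) {e e' : V × V} (h : e ∈ D)
    (h' : e' ∈ D) (heq : s(e.1, e.2) = s(e'.1, e'.2)) : e = e' := by
  obtain ⟨a, b⟩ := e
  obtain ⟨c, d⟩ := e'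
  rcases Sym2.eq_iff.1 heq with ⟨h1, h2⟩ | ⟨h1, h2⟩
  · simp_all
  · simp only at h1 h2
    subst h1 h2
    exact absurd h' (hD.not_swap_mem h)

theorem IsOrientation.exists_lift (hD : IsOrientation G D) {e : Sym2 V} (he : e ∈ G.edgeSet) :
    ∃ p ∈ D, s(p.1, p.2) = e := by
  induction e with
  | _ v w =>
    by_cases h : (v, w) ∈ D
    · exact ⟨(v, w), h, rfl⟩
    · refine ⟨(w, v), ?_, Sym2.eq_swap⟩
      by_contra h'
      exact h ((hD.2 v w he).2 h')

theorem image_orientedLift (hD : IsOrientation G D) {m : Finset (Sym2 V)}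
    (hm : ∀ e ∈ m, e ∈ G.edgeSet) :
    (orientedLift D m).image (fun e => s(e.1, e.2)) = m := by
  ext e
  simp only [Finset.mem_image, mem_orientedLift]
  constructor
  · rintro ⟨p, ⟨-, hp⟩, rfl⟩
    exact hp
  · intro he
    obtain ⟨p, hp, rfl⟩ := hD.exists_lift (hm e he)
    exact ⟨p, ⟨hp, he⟩, rfl⟩

theorem orientedLift_image (hD : IsOrientation G D) {S : Finset (V × V)} (hS : S ⊆ D) :
    orientedLift D (S.image fun e => s(e.1, e.2)) = S := by
  ext e
  simp only [Finset.mem_image, mem_orientedLift]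
  constructor
  · rintro ⟨he, p, hp, hpe⟩
    rwa [← hD.eq_of_sym2_eq (hS hp) he hpe]
  · intro he
    exact ⟨hS he, e, he, rfl⟩

theorem orientedLift_isMultipath (hD : IsOrientation G D) {m : Finset (Sym2 V)}
    (hm : IsGraphMatching G m) : IsMultipathIn D (orientedLift D m) := by
  have key : ∀ e ∈ orientedLift D m, ∀ e' ∈ orientedLift D m, ∀ v : V,
      v ∈ s(e.1, e.2) → v ∈ s(e'.1, e'.2) → e = e' := by
    intro e he e' he' v hv hv'
    rw [mem_orientedLift] at he he'
    by_contra hne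
    exact hm.2 _ he.2 _ he'.2 (fun h => hne (hD.eq_of_sym2_eq he.1 he'.1 h)) v hv hv'
  refine ⟨Finset.filter_subset _ _, fun v => ?_, fun v => ?_, ?_⟩
  · refine Finset.card_le_one.2 fun e he e' he' => ?_
    rw [Finset.mem_filter] at he he'
    exact key e he.1 e' he'.1 v (by simp [← he.2]) (by simp [← he'.2])
  · refine Finset.card_le_one.2 fun e he e' he' => ?_
    rw [Finset.mem_filter] at he he'
    exact key e he.1 e' he'.1 v (by simp [← he.2]) (by simp [← he'.2])
  · rintro ⟨n, f, -, hf, hc⟩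
    -- Consecutive edges share a vertex, hence coincide, which makes `f 0` a loop.
    have h := key _ (hf 0) _ (hf (0 + 1)) (f 0).2 (by simp) (by rw [hc 0]; simp)
    have h2 := hc 0
    rw [← h] at h2
    exact hD.ne (mem_orientedLift.1 (hf 0)).1 h2.symm

theorem image_isGraphMatching (hD : IsOrientation G D) (hA : IsAlternating D)
    {S : Finset (V × V)} (hS : IsMultipathIn D S) :
    IsGraphMatching G (S.image fun e => s(e.1, e.2)) := by
  obtain ⟨hSD, hin, hout, -⟩ := hS
  obtain ⟨A, hA1, hA2⟩ := hA
  have hmix : ∀ e ∈ S, ∀ e' ∈ S, e.2 ≠ e'.1 := by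
    intro e he e' he' h
    by_cases hv : e.2 ∈ A
    · have := Finset.filter_eq_empty_iff.1 (Finset.card_eq_zero.1 (hA1 _ hv)) (hSD he)
      exact this rfl
    · have := Finset.filter_eq_empty_iff.1 (Finset.card_eq_zero.1 (hA2 _ hv)) (hSD he')
      exact this h.symm
  constructor
  · intro e he
    obtain ⟨p, hp, rfl⟩ := Finset.mem_image.1 he
    exact hD.1 p (hSD hp)
  · intro e he e' he' hne v hv hv'
    obtain ⟨p, hp, rfl⟩ := Finset.mem_image.1 he
    obtain ⟨q, hq, rfl⟩ := Finset.mem_image.1 he'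
    have hpq : p ≠ q := fun h => hne (by rw [h])
    rcases Sym2.mem_iff.1 hv with h | h <;> rcases Sym2.mem_iff.1 hv' with h' | h'
    · exact hpq (Finset.card_le_one.1 (hout v) p (by simp [hp, h]) q (by simp [hq, h']))
    · exact hmix q hq p hp (h'.symm.trans h)
    · exact hmix p hp q hq (h.symm.trans h')
    · exact hpq (Finset.card_le_one.1 (hin v) p (by simp [hp, h]) q (by simp [hq, h']))

theorem pair_isMultipath (hD : IsOrientation G D) {u v w : V} (h1 : (u, v) ∈ D)
    (h2 : (v, w) ∈ D) : IsMultipathIn D {(u, v), (v, w)} := by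
  have huv : u ≠ v := hD.ne h1
  have hvw : v ≠ w := hD.ne h2
  have huw : u ≠ w := by
    rintro rfl
    exact hD.not_swap_mem h1 h2
  refine ⟨by simp [Finset.insert_subset_iff, h1, h2], fun x => ?_, fun x => ?_, ?_⟩
  · refine Finset.card_le_one.2 fun e he e' he' => ?_
    simp only [Finset.mem_filter, Finset.mem_insert, Finset.mem_singleton] at he he'
    grind
  · refine Finset.card_le_one.2 fun e he e' he' => ?_
    simp only [Finset.mem_filter, Finset.mem_insert, Finset.mem_singleton] at he he'
    grind
  · rintro ⟨n, f, -, hf, hc⟩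
    simp only [Finset.mem_insert, Finset.mem_singleton] at hf
    -- No edge of the pair starts at `w`, so `(v, w)` has no successor in a cycle.
    have hno : ∀ i, f i ≠ (v, w) := by
      intro i hi
      have := hc i
      rcases hf (i + 1) with h | h <;> rw [hi, h] at this
      · exact huw this.symm
      · exact hvw this.symm
    have h0 := (hf 0).resolve_right (hno 0)
    have h1 := (hf (0 + 1)).resolve_right (hno _)
    have := hc 0
    rw [h0, h1] at this
    exact huv this.symm

end

/-- for a finite simple graph `G` with an orientation `D = G_𝔬`, the poset
of matchings of `G` (ordered by inclusion) is order-isomorphic to the path poset of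
multipaths of `G_𝔬` (ordered by inclusion) iff `𝔬` is alternating. -/
theorem matchingPoset_orderIso_pathPoset_iff {V : Type*} [Fintype V] [DecidableEq V]
    (G : SimpleGraph V) (D : Finset (V × V)) (hD : IsOrientation G D) :
    Nonempty ({m : Finset (Sym2 V) // IsGraphMatching G m} ≃o
        {S : Finset (V × V) // IsMultipathIn D S})
      ↔ IsAlternating D := by
  constructor
  · rintro ⟨φ⟩
    let F : {m : Finset (Sym2 V) // IsGraphMatching G m} →
        {S : Finset (V × V) // IsMultipathIn D S} :=
      fun m => ⟨orientedLift D m.1, orientedLift_isMultipath hD m.2⟩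
    have hinj : Function.Injective F := by
      intro m m' h
      have h' : orientedLift D m.1 = orientedLift D m'.1 := congrArg Subtype.val h
      apply Subtype.ext
      rw [← image_orientedLift hD m.2.1, h', image_orientedLift hD m'.2.1]
    have hsurj : Function.Surjective F :=
      (Finite.injective_iff_surjective_of_equiv φ.toEquiv).1 hinj
    refine ⟨{v | indegIn D v = 0}, fun v hv => hv, fun v hv => ?_⟩
    by_contra hout
    obtain ⟨⟨u, v'⟩, he⟩ := Finset.card_ne_zero.1 hv
    obtain ⟨⟨v'', w⟩, he'⟩ := Finset.card_ne_zero.1 hout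
    obtain ⟨h1, rfl⟩ := Finset.mem_filter.1 he
    obtain ⟨h2, h3⟩ := Finset.mem_filter.1 he'
    simp only at h3
    subst h3
    obtain ⟨m, hm⟩ := hsurj ⟨_, pair_isMultipath hD h1 h2⟩
    have hm' : orientedLift D m.1 = {(u, v''), (v'', w)} := congrArg Subtype.val hm
    have m1 := (mem_orientedLift.1 (hm' ▸ by simp : (u, v'') ∈ orientedLift D m.1)).2
    have m2 := (mem_orientedLift.1 (hm' ▸ by simp : (v'', w) ∈ orientedLift D m.1)).2
    refine m.2.2 _ m1 _ m2 (fun h => ?_) v'' (by simp) (by simp)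
    have := hD.eq_of_sym2_eq h1 h2 h
    exact hD.ne h1 (congrArg Prod.fst this)
  · intro hA
    refine ⟨⟨⟨fun m => ⟨orientedLift D m.1, orientedLift_isMultipath hD m.2⟩,
      fun S => ⟨S.1.image fun e => s(e.1, e.2), image_isGraphMatching hD hA S.2⟩,
      fun m => Subtype.ext (image_orientedLift hD m.2.1),
      fun S => Subtype.ext (orientedLift_image hD S.2.1)⟩, ?_⟩⟩
    intro m m'
    change orientedLift D m.1 ⊆ orientedLift D m'.1 ↔ m.1 ⊆ m'.1
    constructor
    · intro h
      rw [← image_orientedLift hD m.2.1, ← image_orientedLift hD m'.2.1]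
      exact Finset.image_subset_image h
    · intro h e he
      rw [mem_orientedLift] at he ⊢
      exact ⟨he.1, h he.2⟩
end

section
/- Let G be a finite simple graph and 𝔬 an orientation of G. Every matching of G, regarded as a set of directed edges of G_𝔬, is a multipath of G_𝔬; and the set of multipaths of G_𝔬 coincides with the set of matchings of G (as edge sets) if and only if 𝔬 is alternating. -/
/-- The set of directed edges of `D` corresponding to the (undirected) edges in `m`. -/
def dirOf {V : Type*} [DecidableEq V] (D : Finset (V × V)) (m : Finset (Sym2 V)) :
    Finset (V × V) :=
  D.filter fun p => s(p.1, p.2) ∈ m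

theorem indegIn_le_one_iff {V : Type*} [DecidableEq V] (S : Finset (V × V)) (v : V) :
    indegIn S v ≤ 1 ↔ ∀ p ∈ S, ∀ q ∈ S, p.2 = v → q.2 = v → p = q := by
  unfold indegIn
  rw [Finset.card_le_one]
  simp only [Finset.mem_filter]
  exact ⟨fun h p hp q hq h1 h2 => h p ⟨hp, h1⟩ q ⟨hq, h2⟩,
    fun h p hp q hq => h p hp.1 q hq.1 hp.2 hq.2⟩

theorem outdegIn_le_one_iff {V : Type*} [DecidableEq V] (S : Finset (V × V)) (v : V) :
    outdegIn S v ≤ 1 ↔ ∀ p ∈ S, ∀ q ∈ S, p.1 = v → q.1 = v → p = q := by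
  unfold outdegIn
  rw [Finset.card_le_one]
  simp only [Finset.mem_filter]
  exact ⟨fun h p hp q hq h1 h2 => h p ⟨hp, h1⟩ q ⟨hq, h2⟩,
    fun h p hp q hq => h p hp.1 q hq.1 hp.2 hq.2⟩

theorem indegIn_eq_zero_iff {V : Type*} [DecidableEq V] (S : Finset (V × V)) (v : V) :
    indegIn S v = 0 ↔ ∀ p ∈ S, p.2 ≠ v := by
  simp [indegIn, Finset.filter_eq_empty_iff]

theorem outdegIn_eq_zero_iff {V : Type*} [DecidableEq V] (S : Finset (V × V)) (v : V) :
    outdegIn S v = 0 ↔ ∀ p ∈ S, p.1 ≠ v := by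
  simp [outdegIn, Finset.filter_eq_empty_iff]

/-- An orientation contains at most one directed version of each undirected edge. -/
theorem IsOrientation.eq_of_sym2_eq_s6 {V : Type*} {G : SimpleGraph V} {D : Finset (V × V)}
    (hD : IsOrientation G D) {p q : V × V} (hp : p ∈ D) (hq : q ∈ D)
    (h : s(p.1, p.2) = s(q.1, q.2)) : p = q := by
  rcases Sym2.eq_iff.1 h with ⟨h1, h2⟩ | ⟨h1, h2⟩
  · exact Prod.ext h1 h2
  · have hswap : (p.2, p.1) ∈ D := by rw [h1, h2]; exact hq
    exact absurd hswap ((hD.2 p.1 p.2 (hD.1 p hp)).1 hp)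

theorem eq_of_mem_dirOf {V : Type*} [DecidableEq V] {G : SimpleGraph V} {D : Finset (V × V)}
    (hD : IsOrientation G D) {m : Finset (Sym2 V)} (hm : IsGraphMatching G m) {p q : V × V}
    (hp : p ∈ dirOf D m) (hq : q ∈ dirOf D m) (v : V)
    (hvp : v ∈ s(p.1, p.2)) (hvq : v ∈ s(q.1, q.2)) : p = q := by
  obtain ⟨hpD, hpm⟩ := Finset.mem_filter.1 hp
  obtain ⟨hqD, hqm⟩ := Finset.mem_filter.1 hq
  refine hD.eq_of_sym2_eq_s6 hpD hqD ?_
  by_contra hne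
  exact hm.2 _ hpm _ hqm hne v hvp hvq

theorem isMultipathIn_dirOf {V : Type*} [DecidableEq V] {G : SimpleGraph V}
    {D : Finset (V × V)} (hD : IsOrientation G D) {m : Finset (Sym2 V)}
    (hm : IsGraphMatching G m) : IsMultipathIn D (dirOf D m) := by
  refine ⟨Finset.filter_subset _ _, fun v => ?_, fun v => ?_, ?_⟩
  · rw [indegIn_le_one_iff]
    intro p hp q hq h1 h2
    exact eq_of_mem_dirOf hD hm hp hq v (by simp [← h1]) (by simp [← h2])
  · rw [outdegIn_le_one_iff]
    intro p hp q hq h1 h2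
    exact eq_of_mem_dirOf hD hm hp hq v (by simp [← h1]) (by simp [← h2])
  · rintro ⟨n, f, -, hf, hnext⟩
    have heq : f 0 = f (0 + 1) :=
      eq_of_mem_dirOf hD hm (hf _) (hf _) (f 0).2 (by simp) (by simp [hnext 0])
    have hloop : (f 0).2 = (f 0).1 := (hnext 0).trans (congrArg Prod.fst heq.symm)
    exact (hD.1 _ (Finset.mem_filter.1 (hf 0)).1).ne hloop.symm

theorem isMultipathIn_pair {V : Type*} [DecidableEq V] {D : Finset (V × V)} {u v w : V}
    (huv : (u, v) ∈ D) (hvw : (v, w) ∈ D) (h1 : u ≠ v) (h2 : v ≠ w) (h3 : u ≠ w) :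
    IsMultipathIn D {(u, v), (v, w)} := by
  refine ⟨?_, fun x => ?_, fun x => ?_, ?_⟩
  · intro p hp
    simp only [Finset.mem_insert, Finset.mem_singleton] at hp
    rcases hp with rfl | rfl <;> assumption
  · rw [indegIn_le_one_iff]
    simp only [Finset.mem_insert, Finset.mem_singleton]
    rintro p (rfl | rfl) q (rfl | rfl) hp hq <;> simp_all
  · rw [outdegIn_le_one_iff]
    simp only [Finset.mem_insert, Finset.mem_singleton]
    rintro p (rfl | rfl) q (rfl | rfl) hp hq <;> simp_all
  · rintro ⟨n, f, -, hf, hnext⟩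
    simp only [Finset.mem_insert, Finset.mem_singleton] at hf
    -- No edge leaves `w`, so `(v, w)` has no successor in a cycle.
    have hlast : ∀ i, f i ≠ (v, w) := by
      intro i hi
      have h := hnext i
      rcases hf (i + 1) with h' | h' <;> rw [hi, h'] at h
      · exact h3 h.symm
      · exact h2 h.symm
    have hfirst : ∀ i, f i = (u, v) := fun i => (hf i).resolve_right (hlast i)
    have h := hnext 0
    rw [hfirst, hfirst] at h
    exact h1 h.symm

theorem exists_matching_of_isAlternating {V : Type*} [DecidableEq V] {G : SimpleGraph V}
    {D : Finset (V × V)} (hD : IsOrientation G D) (hA : IsAlternating D)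
    {S : Finset (V × V)} (hS : IsMultipathIn D S) :
    ∃ m : Finset (Sym2 V), IsGraphMatching G m ∧ S = dirOf D m := by
  obtain ⟨A, hin, hout⟩ := hA
  obtain ⟨hSD, hSin, hSout, -⟩ := hS
  have hno : ∀ p ∈ S, ∀ q ∈ S, p.1 ≠ q.2 := by
    intro p hp q hq h
    by_cases hv : p.1 ∈ A
    · exact (indegIn_eq_zero_iff D _).1 (hin _ hv) q (hSD hq) h.symm
    · exact (outdegIn_eq_zero_iff D _).1 (hout _ hv) p (hSD hp) rfl
  refine ⟨S.image fun p => s(p.1, p.2), ⟨?_, ?_⟩, ?_⟩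
  · intro e he
    obtain ⟨p, hp, rfl⟩ := Finset.mem_image.1 he
    exact hD.1 p (hSD hp)
  · intro e he e' he' hne v hv hv'
    obtain ⟨p, hp, rfl⟩ := Finset.mem_image.1 he
    obtain ⟨q, hq, rfl⟩ := Finset.mem_image.1 he'
    refine hne (congrArg (fun r : V × V => s(r.1, r.2)) (?_ : p = q))
    rcases Sym2.mem_iff.1 hv with h | h <;> rcases Sym2.mem_iff.1 hv' with h' | h'
    · exact (outdegIn_le_one_iff S v).1 (hSout v) p hp q hq h.symm h'.symm
    · exact absurd (h.symm.trans h') (hno p hp q hq)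
    · exact absurd (h'.symm.trans h) (hno q hq p hp)
    · exact (indegIn_le_one_iff S v).1 (hSin v) p hp q hq h.symm h'.symm
  · ext p
    simp only [dirOf, Finset.mem_filter, Finset.mem_image]
    constructor
    · exact fun hp => ⟨hSD hp, p, hp, rfl⟩
    · rintro ⟨hp, q, hq, h⟩
      exact hD.eq_of_sym2_eq_s6 (hSD hq) hp h ▸ hq

/-- for a finite simple graph `G` with an orientation `D = G_𝔬`, every
matching of `G`, regarded as a set of directed edges of `G_𝔬`, is a multipath of `G_𝔬`;
and the multipaths of `G_𝔬` coincide with the matchings of `G` (as edge sets) iff `𝔬`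
is alternating. -/
theorem matching_dir_isMultipath_and_coincide_iff_alternating {V : Type*} [Fintype V]
    [DecidableEq V] (G : SimpleGraph V) (D : Finset (V × V))
    (hD : IsOrientation G D) :
    (∀ m : Finset (Sym2 V), IsGraphMatching G m → IsMultipathIn D (dirOf D m))
      ∧ ((∀ S : Finset (V × V), IsMultipathIn D S →
            ∃ m : Finset (Sym2 V), IsGraphMatching G m ∧ S = dirOf D m)
          ↔ IsAlternating D) := by
  refine ⟨fun m hm => isMultipathIn_dirOf hD hm, fun h => ?_,
    fun hA S hS => exists_matching_of_isAlternating hD hA hS⟩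
  refine ⟨{v | indegIn D v = 0}, fun v hv => hv, fun v hv => ?_⟩
  by_contra hv'
  have hv1 : ¬ indegIn D v = 0 := hv
  rw [indegIn_eq_zero_iff] at hv1
  rw [outdegIn_eq_zero_iff] at hv'
  push Not at hv1 hv'
  obtain ⟨⟨u, v₁⟩, huv, rfl⟩ := hv1
  obtain ⟨⟨v₂, w⟩, hvw, heq⟩ := hv'
  dsimp only at heq
  subst heq
  have h1 : u ≠ v₂ := (hD.1 _ huv).ne
  have h2 : v₂ ≠ w := (hD.1 _ hvw).ne
  have h3 : u ≠ w := by
    rintro rfl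
    exact (hD.2 _ _ (hD.1 _ huv)).1 huv hvw
  obtain ⟨m, hm, hSm⟩ := h _ (isMultipathIn_pair huv hvw h1 h2 h3)
  have heq : (u, v₂) = (v₂, w) :=
    eq_of_mem_dirOf hD hm (by rw [← hSm]; simp) (by rw [← hSm]; simp) v₂ (by simp) (by simp)
  exact h1 (congrArg Prod.fst heq)
end

section
/- Let G be a finite simple graph, and let 𝔬₁ and 𝔬₂ be two alternating orientations of G. Then the path posets P(G_𝔬₁) and P(G_𝔬₂) are order-isomorphic. -/
theorem IsAlternating.not_consecutive {V : Type*} [DecidableEq V] {D : Finset (V × V)}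
    (h : IsAlternating D) {p q : V × V} (hp : p ∈ D) (hq : q ∈ D) : p.2 ≠ q.1 := by
  obtain ⟨A, hA, hB⟩ := h
  intro e
  by_cases hm : p.2 ∈ A
  · have := hA _ hm
    rw [indegIn, Finset.card_eq_zero, Finset.filter_eq_empty_iff] at this
    exact this hp rfl
  · have := hB _ hm
    rw [outdegIn, Finset.card_eq_zero, Finset.filter_eq_empty_iff] at this
    exact this hq e.symm

theorem IsOrientation.mk_injOn {V : Type*} {G : SimpleGraph V} {D : Finset (V × V)}
    (h : IsOrientation G D) {p q : V × V} (hp : p ∈ D) (hq : q ∈ D)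
    (e : s(p.1, p.2) = s(q.1, q.2)) : p = q := by
  obtain ⟨a, b⟩ := p
  obtain ⟨c, d⟩ := q
  rcases Sym2.eq_iff.1 e with ⟨h1, h2⟩ | ⟨h1, h2⟩
  · exact Prod.ext h1 h2
  · simp only at h1 h2
    subst h1 h2
    exact absurd hq ((h.2 _ _ (h.1 _ hp)).1 hp)

theorem IsMultipathIn.isGraphMatching {V : Type*} [DecidableEq V] {G : SimpleGraph V}
    {D S : Finset (V × V)} (h : IsOrientation G D) (ha : IsAlternating D)
    (hS : IsMultipathIn D S) : IsGraphMatching G (S.image fun p => s(p.1, p.2)) := by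
  obtain ⟨hSD, hin, hout, -⟩ := hS
  constructor
  · intro e he
    obtain ⟨p, hp, rfl⟩ := Finset.mem_image.1 he
    exact h.1 p (hSD hp)
  · intro e he e' he' hne v hv hv'
    obtain ⟨p, hp, rfl⟩ := Finset.mem_image.1 he
    obtain ⟨q, hq, rfl⟩ := Finset.mem_image.1 he'
    have hpq : p ≠ q := by rintro rfl; exact hne rfl
    rcases Sym2.mem_iff.1 hv with h1 | h1 <;> rcases Sym2.mem_iff.1 hv' with h2 | h2
    · exact hpq (Finset.card_le_one.1 (hout v) p (Finset.mem_filter.2 ⟨hp, h1.symm⟩) q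
        (Finset.mem_filter.2 ⟨hq, h2.symm⟩))
    · exact ha.not_consecutive (hSD hq) (hSD hp) (h2.symm.trans h1)
    · exact ha.not_consecutive (hSD hp) (hSD hq) (h1.symm.trans h2)
    · exact hpq (Finset.card_le_one.1 (hin v) p (Finset.mem_filter.2 ⟨hp, h1.symm⟩) q
        (Finset.mem_filter.2 ⟨hq, h2.symm⟩))

theorem IsGraphMatching.isMultipathIn {V : Type*} [DecidableEq V] {G : SimpleGraph V}
    {D : Finset (V × V)} {m : Finset (Sym2 V)} (h : IsOrientation G D) (ha : IsAlternating D)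
    (hm : IsGraphMatching G m) : IsMultipathIn D (D.filter fun p => s(p.1, p.2) ∈ m) := by
  have key : ∀ p ∈ D.filter (fun p => s(p.1, p.2) ∈ m),
      ∀ q ∈ D.filter (fun p => s(p.1, p.2) ∈ m), ∀ v,
      v ∈ s(p.1, p.2) → v ∈ s(q.1, q.2) → p = q := by
    intro p hp q hq v hv hv'
    rw [Finset.mem_filter] at hp hq
    refine h.mk_injOn hp.1 hq.1 ?_
    by_contra hne
    exact hm.2 _ hp.2 _ hq.2 hne v hv hv'
  refine ⟨Finset.filter_subset _ _, fun v => ?_, fun v => ?_, ?_⟩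
  · refine Finset.card_le_one.2 fun p hp q hq => ?_
    obtain ⟨hpS, rfl⟩ := Finset.mem_filter.1 hp
    obtain ⟨hqS, e⟩ := Finset.mem_filter.1 hq
    exact key p hpS q hqS p.2 (Sym2.mem_mk_right _ _) (e ▸ Sym2.mem_mk_right _ _)
  · refine Finset.card_le_one.2 fun p hp q hq => ?_
    obtain ⟨hpS, rfl⟩ := Finset.mem_filter.1 hp
    obtain ⟨hqS, e⟩ := Finset.mem_filter.1 hq
    exact key p hpS q hqS p.1 (Sym2.mem_mk_left _ _) (e ▸ Sym2.mem_mk_left _ _)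
  · rintro ⟨n, f, -, hf, hc⟩
    exact ha.not_consecutive (Finset.mem_filter.1 (hf 0)).1 (Finset.mem_filter.1 (hf (0 + 1))).1
      (hc 0)

/-- For an alternating orientation `D` of `G`, forgetting directions is an order isomorphism from
the path poset onto the poset of matchings of `G`; the inverse gives each edge of a matching its
direction in `D`. -/
def multipathIsoMatching {V : Type*} [DecidableEq V] {G : SimpleGraph V}
    {D : Finset (V × V)} (h : IsOrientation G D) (ha : IsAlternating D) :
    {S : Finset (V × V) // IsMultipathIn D S} ≃o {m : Finset (Sym2 V) // IsGraphMatching G m} where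
  toFun S := ⟨S.1.image fun p => s(p.1, p.2), S.2.isGraphMatching h ha⟩
  invFun m := ⟨D.filter fun p => s(p.1, p.2) ∈ m.1, m.2.isMultipathIn h ha⟩
  left_inv := by
    rintro ⟨S, hS⟩
    refine Subtype.ext (Finset.ext fun p => ?_)
    simp only [Finset.mem_filter, Finset.mem_image]
    constructor
    · rintro ⟨hp, q, hq, e⟩
      exact h.mk_injOn (hS.1 hq) hp e ▸ hq
    · exact fun hp => ⟨hS.1 hp, p, hp, rfl⟩
  right_inv := by
    rintro ⟨m, hm⟩
    refine Subtype.ext (Finset.ext fun e => ?_)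
    simp only [Finset.mem_filter, Finset.mem_image]
    constructor
    · rintro ⟨p, ⟨-, hp⟩, rfl⟩
      exact hp
    · intro he
      induction e using Sym2.ind with
      | _ a b =>
        by_cases hab : (a, b) ∈ D
        · exact ⟨(a, b), ⟨hab, he⟩, rfl⟩
        · have hadj : G.Adj b a := (G.mem_edgeSet.1 (hm.1 _ he)).symm
          exact ⟨(b, a), ⟨(h.2 b a hadj).2 hab, Sym2.eq_swap ▸ he⟩, Sym2.eq_swap⟩
  map_rel_iff' := by
    rintro ⟨S, hS⟩ ⟨T, hT⟩
    refine ⟨fun hle p hp => ?_, fun hle => Finset.image_subset_image hle⟩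
    obtain ⟨q, hq, e⟩ := Finset.mem_image.1 (hle (Finset.mem_image_of_mem _ hp))
    exact h.mk_injOn (hT.1 hq) (hS.1 hp) e ▸ hq

/-- for two alternating orientations `𝔬₁`, `𝔬₂` of a finite simple graph
`G`, the path posets `P(G_𝔬₁)` and `P(G_𝔬₂)` are order-isomorphic. -/
theorem pathPosets_of_alternating_orderIso {V : Type*} [Fintype V] [DecidableEq V]
    (G : SimpleGraph V) (D₁ D₂ : Finset (V × V))
    (h₁ : IsOrientation G D₁) (h₂ : IsOrientation G D₂)
    (ha₁ : IsAlternating D₁) (ha₂ : IsAlternating D₂) :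
    Nonempty ({S : Finset (V × V) // IsMultipathIn D₁ S} ≃o
      {S : Finset (V × V) // IsMultipathIn D₂ S}) := by
  exact ⟨(multipathIsoMatching h₁ ha₁).trans (multipathIsoMatching h₂ ha₂).symm⟩
end

section
/- Let G be a finite connected simple graph whose number of edges equals its number of vertices. Then G has exactly 2 orientations in which every vertex has indegree at most 1, and they are obtained from one another by reversing the orientation of every edge of the unique cycle of G. -/
/-- The directed edges of an orientation correspond bijectively to the edges of the graph. -/
lemma IsOrientation.card_eq {V : Type*} [Fintype V] [DecidableEq V]
    {G : SimpleGraph V} [DecidableRel G.Adj] {D : Finset (V × V)} (hD : IsOrientation G D) :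
    D.card = G.edgeFinset.card := by
  refine Finset.card_bij (fun p _ => s(p.1, p.2)) ?_ ?_ ?_
  · intro p hp
    simpa using hD.1 p hp
  · rintro ⟨a, b⟩ hp ⟨c, d⟩ hq h
    have hab := hD.1 _ hp
    rcases Sym2.eq_iff.1 h with ⟨h1, h2⟩ | ⟨h1, h2⟩
    · simp_all
    · simp only at h1 h2
      subst h1 h2
      exact absurd hq ((hD.2 _ _ hab).1 hp)
  · intro e he
    induction e with
    | h a b =>
      have hab : G.Adj a b := by simpa using he
      by_cases h : (a, b) ∈ D
      · exact ⟨(a, b), h, rfl⟩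
      · exact ⟨(b, a), by_contra fun h' => h ((hD.2 _ _ hab).2 h'), Sym2.eq_swap⟩

lemma indegIn_eq_one {V : Type*} [Fintype V] [DecidableEq V]
    {G : SimpleGraph V} [DecidableRel G.Adj] (hcard : G.edgeFinset.card = Fintype.card V)
    {D : Finset (V × V)} (hD : IsOrientation G D) (h1 : ∀ v, indegIn D v ≤ 1) (v : V) :
    indegIn D v = 1 := by
  have hsum : ∑ v, indegIn D v = ∑ _v : V, 1 := by
    have := Finset.card_eq_sum_card_fiberwise (s := D) (t := Finset.univ) (f := Prod.snd)
      (fun _ _ => by simp)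
    rw [hD.card_eq, hcard] at this
    simpa [indegIn] using this.symm
  exact (Finset.sum_eq_sum_iff_of_le fun v _ => h1 v).1 hsum v (Finset.mem_univ v)

lemma indegIn_inter_add_sdiff {V : Type*} [DecidableEq V] (D D' : Finset (V × V)) (v : V) :
    indegIn (D ∩ D') v + indegIn (D \ D') v = indegIn D v := by
  unfold indegIn
  rw [← Finset.card_union_of_disjoint]
  · congr 1
    ext p
    simp only [Finset.mem_union, Finset.mem_filter, Finset.mem_inter, Finset.mem_sdiff]
    tauto
  · exact Finset.disjoint_filter_filter (Finset.disjoint_sdiff_inter D D').symm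

/-- Two free-flow orientations differ in a balanced set of directed edges. -/
lemma balanced_sdiff {V : Type*} [Fintype V] [DecidableEq V]
    {G : SimpleGraph V} [DecidableRel G.Adj] (hcard : G.edgeFinset.card = Fintype.card V)
    {D D' : Finset (V × V)} (hD : IsOrientation G D) (h1 : ∀ v, indegIn D v ≤ 1)
    (hD' : IsOrientation G D') (h1' : ∀ v, indegIn D' v ≤ 1) (v : V) :
    indegIn (D \ D') v = outdegIn (D \ D') v := by
  have hswap : outdegIn (D \ D') v = indegIn (D' \ D) v := by
    refine Finset.card_bij (fun p _ => p.swap) ?_ ?_ ?_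
    · rintro ⟨a, b⟩ hp
      simp only [Finset.mem_filter, Finset.mem_sdiff, Prod.swap_prod_mk] at hp ⊢
      have hab := hD.1 _ hp.1.1
      have := hD.2 _ _ hab
      have := hD'.2 _ _ hab
      tauto
    · rintro p _ q _ h
      exact Prod.swap_injective h
    · rintro ⟨a, b⟩ hp
      refine ⟨(b, a), ?_, rfl⟩
      simp only [Finset.mem_filter, Finset.mem_sdiff] at hp ⊢
      have hab := hD'.1 _ hp.1.1
      have := hD.2 _ _ hab
      have := hD'.2 _ _ hab
      tauto
  have e1 := indegIn_inter_add_sdiff D D' v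
  have e2 := indegIn_inter_add_sdiff D' D v
  rw [indegIn_eq_one hcard hD h1] at e1
  rw [indegIn_eq_one hcard hD' h1', Finset.inter_comm] at e2
  omega

/-- A balanced set of directed edges has no net flow through a cut, so it contains no
bridge. -/
lemma not_isBridge_of_balanced {V : Type*} [Fintype V] [DecidableEq V]
    {H : SimpleGraph V} {X : Finset (V × V)} (hX : ∀ p ∈ X, H.Adj p.1 p.2)
    (hanti : ∀ u v, (u, v) ∈ X → (v, u) ∉ X) (hbal : ∀ v, indegIn X v = outdegIn X v)
    {u v : V} (huv : (u, v) ∈ X) : ¬ H.IsBridge s(u, v) := by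
  classical
  rw [SimpleGraph.isBridge_iff]
  intro hbr
  -- The side of the cut containing `u`; the only edge of `X` crossing it is `(u, v)`.
  let S : Finset V := Finset.univ.filter fun w => (H.deleteEdges {s(u, v)}).Reachable u w
  have hS : ∀ w, w ∈ S ↔ (H.deleteEdges {s(u, v)}).Reachable u w := by simp [S]
  have hin : (X.filter fun p => p.2 ∈ S).card = ∑ w ∈ S, indegIn X w := by
    rw [Finset.card_eq_sum_card_fiberwise (s := X.filter fun p => p.2 ∈ S) (t := S)
      (f := Prod.snd) (fun p hp => (Finset.mem_filter.1 hp).2)]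
    refine Finset.sum_congr rfl fun w hw => ?_
    unfold indegIn
    congr 1
    ext p
    simp only [Finset.mem_filter]
    grind
  have hout : (X.filter fun p => p.1 ∈ S).card = ∑ w ∈ S, outdegIn X w := by
    rw [Finset.card_eq_sum_card_fiberwise (s := X.filter fun p => p.1 ∈ S) (t := S)
      (f := Prod.fst) (fun p hp => (Finset.mem_filter.1 hp).2)]
    refine Finset.sum_congr rfl fun w hw => ?_
    unfold outdegIn
    congr 1
    ext p
    simp only [Finset.mem_filter]
    grind
  have hlt : (X.filter fun p => p.2 ∈ S).card < (X.filter fun p => p.1 ∈ S).card := by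
    apply Finset.card_lt_card
    refine (Finset.ssubset_iff_of_subset ?_).2 ⟨(u, v), ?_, ?_⟩
    · rintro ⟨a, b⟩ hp
      simp only [Finset.mem_filter, hS] at hp ⊢
      refine ⟨hp.1, ?_⟩
      by_cases he : s(a, b) = s(u, v)
      · rcases Sym2.eq_iff.1 he with ⟨rfl, rfl⟩ | ⟨rfl, rfl⟩
        · exact SimpleGraph.Reachable.refl _
        · exact absurd hp.1 (hanti _ _ huv)
      · have hab : (H.deleteEdges {s(u, v)}).Adj a b := by
          rw [SimpleGraph.deleteEdges_adj]
          exact ⟨hX _ hp.1, by simpa using he⟩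
        exact hp.2.trans hab.symm.reachable
    · simp [hS, huv]
    · simp only [Finset.mem_filter, hS]
      exact fun h => hbr h.2
  rw [hin, hout, Finset.sum_congr rfl fun w _ => hbal w] at hlt
  exact lt_irrefl _ hlt

lemma isTree_deleteEdges {V : Type*} [Fintype V] [DecidableEq V]
    {G : SimpleGraph V} [DecidableRel G.Adj] (hconn : G.Connected)
    (hcard : G.edgeFinset.card = Fintype.card V) {a b : V} (hab : G.Adj a b)
    (hnb : ¬ G.IsBridge s(a, b)) : (G.deleteEdges {s(a, b)}).IsTree := by
  rw [SimpleGraph.isTree_iff_connected_and_card]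
  refine ⟨hconn.connected_delete_edge_of_not_isBridge hnb, ?_⟩
  rw [SimpleGraph.edgeSet_deleteEdges, Nat.card_coe_set_eq,
    Set.ncard_sdiff_singleton_add_one (by simpa using hab), Nat.card_eq_fintype_card, ← hcard,
    ← SimpleGraph.coe_edgeFinset, Set.ncard_coe_finset]

/-- Distinct free-flow orientations disagree on every non-bridge `s(a, b)`: a balanced
difference avoiding it would lie in the tree `G - s(a, b)`. -/
lemma mem_sdiff_of_not_isBridge {V : Type*} [Fintype V] [DecidableEq V]
    {G : SimpleGraph V} [DecidableRel G.Adj] (hconn : G.Connected)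
    (hcard : G.edgeFinset.card = Fintype.card V)
    {D D' : Finset (V × V)} (hD : IsOrientation G D) (h1 : ∀ v, indegIn D v ≤ 1)
    (hD' : IsOrientation G D') (h1' : ∀ v, indegIn D' v ≤ 1) (hne : D ≠ D')
    {a b : V} (hab : (a, b) ∈ D) (hnb : ¬ G.IsBridge s(a, b)) : (a, b) ∉ D' := by
  intro hab'
  have hadj : G.Adj a b := hD.1 _ hab
  have hX : ∀ p ∈ D \ D', (G.deleteEdges {s(a, b)}).Adj p.1 p.2 := by
    rintro ⟨c, d⟩ hp
    rw [Finset.mem_sdiff] at hp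
    rw [SimpleGraph.deleteEdges_adj]
    refine ⟨hD.1 _ hp.1, fun he => ?_⟩
    rcases Sym2.eq_iff.1 he with ⟨h1, h2⟩ | ⟨h1, h2⟩
    · simp only at h1 h2
      subst h1 h2
      exact hp.2 hab'
    · simp only at h1 h2
      subst h1 h2
      exact (hD.2 _ _ hadj).1 hab hp.1
  have hempty : D \ D' = ∅ := by
    rw [Finset.eq_empty_iff_forall_notMem]
    rintro ⟨c, d⟩ hp
    refine not_isBridge_of_balanced hX (fun u v h h' => ?_)
      (balanced_sdiff hcard hD h1 hD' h1') hp
      (SimpleGraph.isAcyclic_iff_forall_isBridge.1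
        (isTree_deleteEdges hconn hcard hadj hnb).isAcyclic (hX _ hp))
    rw [Finset.mem_sdiff] at h h'
    exact (hD.2 _ _ (hD.1 _ h.1)).1 h.1 h'.1
  refine hne (Finset.eq_of_subset_of_card_le (Finset.sdiff_eq_empty_iff_subset.1 hempty) ?_)
  rw [hD.card_eq, hD'.card_eq]

/-- A free-flow orientation through a prescribed direction of a non-bridge: `b` receives
`(a, b)`, and every other vertex receives an edge from a vertex closer to `b`
in `G - s(a, b)`. -/
lemma exists_orientation_mem {V : Type*} [Fintype V] [DecidableEq V]
    {G : SimpleGraph V} [DecidableRel G.Adj] (hconn : G.Connected)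
    (hcard : G.edgeFinset.card = Fintype.card V) {a b : V} (hab : G.Adj a b)
    (hnb : ¬ G.IsBridge s(a, b)) :
    ∃ D : Finset (V × V), (IsOrientation G D ∧ ∀ v, indegIn D v ≤ 1) ∧ (a, b) ∈ D := by
  have hH := hconn.connected_delete_edge_of_not_isBridge hnb
  set H := G.deleteEdges {s(a, b)} with hHdef
  have hpar : ∀ v, ∃ w, if v = b then w = a else H.Adj w v ∧ H.dist w b < H.dist v b := by
    intro v
    split_ifs with hv
    · exact ⟨a, rfl⟩
    · obtain ⟨p, hp⟩ := hH.exists_walk_length_eq_dist v b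
      cases p with
      | nil => exact absurd rfl hv
      | cons h q =>
        refine ⟨_, h.symm, ?_⟩
        rw [← hp, SimpleGraph.Walk.length_cons]
        exact Nat.lt_succ_of_le (SimpleGraph.dist_le q)
  choose f hf using hpar
  have hfb : f b = a := by simpa using hf b
  have hf' : ∀ v, v ≠ b → H.Adj (f v) v ∧ H.dist (f v) b < H.dist v b := by
    intro v hv
    simpa [hv] using hf v
  have hadj : ∀ v, G.Adj (f v) v := by
    intro v
    by_cases hv : v = b
    · rw [hv, hfb]
      exact hab
    · exact G.deleteEdges_le _ (hf' v hv).1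
  have hnab : ¬ H.Adj b a := by
    simp [hHdef, SimpleGraph.deleteEdges_adj, Sym2.eq_swap]
  -- No edge is used from both ends.
  have hno : ∀ v w, f v = w → f w = v → False := by
    intro v w h1 h2
    by_cases hv : v = b
    · subst hv
      have hw : w = a := h1.symm.trans hfb
      subst hw
      have := (hf' w hab.ne).1
      rw [h2] at this
      exact hnab this
    · by_cases hw : w = b
      · subst hw
        have hva : v = a := h2.symm.trans hfb
        subst hva
        have := (hf' v hv).1
        rw [h1] at this
        exact hnab this
      · have e1 := (hf' v hv).2
        have e2 := (hf' w hw).2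
        rw [h1] at e1
        rw [h2] at e2
        omega
  have hinj : Function.Injective fun v => s(f v, v) := by
    intro v w h
    rcases Sym2.eq_iff.1 h with ⟨_, h2⟩ | ⟨h1, h2⟩
    · exact h2
    · exact (hno v w h1 h2.symm).elim
  have himg : Finset.univ.image (fun v => s(f v, v)) = G.edgeFinset := by
    apply Finset.eq_of_subset_of_card_le
    · intro e he
      obtain ⟨v, -, rfl⟩ := Finset.mem_image.1 he
      simpa using hadj v
    · rw [Finset.card_image_of_injective _ hinj, hcard, Finset.card_univ]
  have hmem : ∀ v w, (v, w) ∈ Finset.univ.image (fun v => (f v, v)) ↔ f w = v := by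
    intro v w
    simp
  refine ⟨Finset.univ.image fun v => (f v, v), ⟨⟨?_, ?_⟩, ?_⟩, ?_⟩
  · rintro ⟨v, w⟩ hp
    rw [hmem] at hp
    rw [← hp]
    exact hadj w
  · intro v w hvw
    rw [hmem, hmem]
    refine ⟨fun h h' => hno v w h' h, fun h => ?_⟩
    have he : s(v, w) ∈ Finset.univ.image (fun v => s(f v, v)) := by
      rw [himg]
      simpa using hvw
    obtain ⟨x, -, hx⟩ := Finset.mem_image.1 he
    rcases Sym2.eq_iff.1 hx with ⟨h1, rfl⟩ | ⟨h1, rfl⟩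
    · exact h1
    · exact absurd h1 h
  · intro v
    refine Finset.card_le_one.2 ?_
    rintro ⟨a, b⟩ hp ⟨c, d⟩ hq
    rw [Finset.mem_filter, hmem] at hp hq
    grind
  · rw [hmem]
    exact hfb

open scoped Classical in
/-- a finite connected simple graph `G` with as many edges as vertices
has exactly 2 orientations in which every vertex has indegree at most 1, and they are
obtained from one another by reversing the orientation of every edge of the unique
cycle of `G` (the edges of the unique cycle being exactly the non-bridge edges). -/
theorem pseudotree_two_freeFlow_orientations {V : Type*} [Fintype V] [DecidableEq V]
    (G : SimpleGraph V) [DecidableRel G.Adj] (hconn : G.Connected)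
    (hcard : G.edgeFinset.card = Fintype.card V) :
    {D : Finset (V × V) | IsOrientation G D ∧ ∀ v : V, indegIn D v ≤ 1}.ncard = 2
      ∧ ∀ D₁ D₂ : Finset (V × V),
          IsOrientation G D₁ → (∀ v : V, indegIn D₁ v ≤ 1) →
          IsOrientation G D₂ → (∀ v : V, indegIn D₂ v ≤ 1) → D₁ ≠ D₂ →
          D₂ = (D₁.filter fun p => G.IsBridge s(p.1, p.2)) ∪
            ((D₁.filter fun p => ¬ G.IsBridge s(p.1, p.2)).image Prod.swap) := by
  refine ⟨?_, ?_⟩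
  -- `G` is not a tree, so it has a non-bridge.
  · obtain ⟨a, b, hab, hnb⟩ : ∃ a b, G.Adj a b ∧ ¬ G.IsBridge s(a, b) := by
      by_contra! hall
      have hacyc : G.IsAcyclic := by
        rw [SimpleGraph.isAcyclic_iff_forall_isBridge]
        intro e he
        induction e with
        | h a b => exact hall a b he
      have := (SimpleGraph.IsTree.mk hconn hacyc).card_edgeFinset
      omega
    obtain ⟨D, hD, hDm⟩ := exists_orientation_mem hconn hcard hab hnb
    have hnb' : ¬ G.IsBridge s(b, a) := by rwa [Sym2.eq_swap]
    obtain ⟨D', hD', hDm'⟩ := exists_orientation_mem hconn hcard hab.symm hnb'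
    rw [Set.ncard_eq_two]
    refine ⟨D, D', ?_, ?_⟩
    · rintro rfl
      exact (hD.1.2 _ _ hab).1 hDm hDm'
    · ext E
      simp only [Set.mem_ofPred_eq, Set.mem_insert_iff, Set.mem_singleton_iff]
      constructor
      · rintro ⟨hE, hE1⟩
        by_cases h : (a, b) ∈ E
        · left
          by_contra hne
          exact mem_sdiff_of_not_isBridge hconn hcard hE hE1 hD.1 hD.2 hne h hnb hDm
        · right
          by_contra hne
          exact mem_sdiff_of_not_isBridge hconn hcard hD'.1 hD'.2 hE hE1 (Ne.symm hne) hDm' hnb'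
            ((hE.2 _ _ hab.symm).2 h)
      · rintro (rfl | rfl)
        · exact hD
        · exact hD'
  · intro D₁ D₂ hD₁ h₁ hD₂ h₂ hne
    have hiff : ∀ u v, (u, v) ∈ D₁ → ((u, v) ∈ D₂ ↔ G.IsBridge s(u, v)) := by
      intro u v huv
      constructor
      · intro h
        by_contra hnb
        exact mem_sdiff_of_not_isBridge hconn hcard hD₁ h₁ hD₂ h₂ hne huv hnb h
      · intro hbr
        by_contra h
        refine not_isBridge_of_balanced (X := D₁ \ D₂)
          (fun p hp => hD₁.1 p (Finset.mem_sdiff.1 hp).1) (fun x y h h' => ?_)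
          (balanced_sdiff hcard hD₁ h₁ hD₂ h₂) (Finset.mem_sdiff.2 ⟨huv, h⟩) hbr
        rw [Finset.mem_sdiff] at h h'
        exact (hD₁.2 _ _ (hD₁.1 _ h.1)).1 h.1 h'.1
    ext ⟨u, v⟩
    have hmem : (u, v) ∈ ((D₁.filter fun p => ¬ G.IsBridge s(p.1, p.2)).image Prod.swap) ↔
        (v, u) ∈ D₁ ∧ ¬ G.IsBridge s(v, u) := by
      simp only [Finset.mem_image, Finset.mem_filter, Prod.exists, Prod.swap_prod_mk,
        Prod.mk.injEq]
      constructor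
      · rintro ⟨x, y, h, rfl, rfl⟩
        exact h
      · intro h
        exact ⟨v, u, h, rfl, rfl⟩
    rw [Finset.mem_union, hmem, Finset.mem_filter]
    by_cases hadj : G.Adj u v
    · have e1 := hD₁.2 u v hadj
      have e2 := hD₂.2 u v hadj
      have e3 := hiff u v
      have e4 := hiff v u
      tauto
    · have n1 : (u, v) ∉ D₁ := fun h => hadj (hD₁.1 _ h)
      have n2 : (u, v) ∉ D₂ := fun h => hadj (hD₂.1 _ h)
      have n3 : (v, u) ∉ D₁ := fun h => hadj (hD₁.1 _ h).symm
      tauto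
end
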